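/- Let g ∈ X^(s) strictly for a positive integer s, with g(x) → +∞ as x → ∞. For 1 ≤ k ≤ n, define L_{n,k}(x) = B_{n,k}(g'(x), g''(x), …, g^{(n−k+1)}(x)), where B_{n,k} denotes the Bell polynomial. Then L_{n,k} either vanishes identically for all large x or belongs to A^(sk−n−ν) strictly for some nonnegative integer ν (i.e., L_{n,k} ∈ X^(sk−n), not necessarily strictly). Moreover, L_{k,k}(x) = (g'(x))^k is positive for all large x and belongs to A^(sk−k) strictly. -/

import Mathlib

open Filter Finset Real

noncomputable section

/-- `α` has the Poincaré-type asymptotic expansion `α(x) ~ Σ_{i≥0} c_i x^(γ-i)` as `x → ∞`,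
which may be differentiated term by term any number of times: `α` is infinitely
differentiable on some `(a, ∞)` with `a > 0`, and for all `j N : ℕ`,
`α^{(j)}(x) − Σ_{i<N} c_i (γ−i)(γ−i−1)⋯(γ−i−j+1) x^(γ−i−j) = O(x^(γ−N−j))` as `x → ∞`. -/
def HasExpA (γ : ℝ) (c : ℕ → ℝ) (α : ℝ → ℝ) : Prop :=
  (∃ a : ℝ, 0 < a ∧ ∀ x ∈ Set.Ioi a, ContDiffAt ℝ (⊤ : ℕ∞) α x) ∧
  ∀ j N : ℕ,
    (fun x : ℝ => iteratedDeriv j α x -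
        ∑ i ∈ Finset.range N,
          c i * (∏ l ∈ Finset.range j, (γ - (i : ℝ) - (l : ℝ))) * x ^ (γ - (i : ℝ) - (j : ℝ)))
      =O[atTop] fun x : ℝ => x ^ (γ - (N : ℝ) - (j : ℝ))

/-- `α` belongs to the class `A^(γ)`. -/
def MemA (γ : ℝ) (α : ℝ → ℝ) : Prop := ∃ c : ℕ → ℝ, HasExpA γ c α

/-- `α` belongs to the class `A^(γ)` strictly (`c 0 ≠ 0`). -/
def MemAS (γ : ℝ) (α : ℝ → ℝ) : Prop := ∃ c : ℕ → ℝ, c 0 ≠ 0 ∧ HasExpA γ c α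

/-- `α` belongs to `X^(γ)` strictly: `α ∈ A^(γ)` strictly and every derivative `α^{(j)}`,
`j ≥ 1`, either vanishes identically for all large `x` or belongs to `A^(γ−j−k)` strictly
for some nonnegative integer `k`. -/
def MemXS (γ : ℝ) (α : ℝ → ℝ) : Prop :=
  MemAS γ α ∧
  ∀ j : ℕ, 1 ≤ j →
    (∀ᶠ x in atTop, iteratedDeriv j α x = 0) ∨
    ∃ k : ℕ, MemAS (γ - (j : ℝ) - (k : ℝ)) (iteratedDeriv j α)

/-- `f`, infinitely differentiable for all large `x`, belongs to the class `B^(m)`: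
`f(x) = Σ_{k=1}^m p_k(x) f^{(k)}(x)` for all large `x`, where for `1 ≤ k ≤ m−1` each `p_k`
either has an empty expansion (all its derivatives are `O(x^{−μ})` for every `μ > 0`) or
belongs to `A^(i_k)` strictly with `i_k ≤ k` an integer, and `p_m ∈ A^(i_m)` strictly with
`i_m ≤ m` an integer. -/
def MemB (m : ℕ) (f : ℝ → ℝ) : Prop :=
  (∀ᶠ x in atTop, ContDiffAt ℝ (⊤ : ℕ∞) f x) ∧
  ∃ p : ℕ → ℝ → ℝ,
    (∀ᶠ x in atTop, f x = ∑ k ∈ Finset.Icc 1 m, p k x * iteratedDeriv k f x) ∧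
    (∀ k ∈ Finset.Icc 1 (m - 1),
      ((∀ᶠ x in atTop, ContDiffAt ℝ (⊤ : ℕ∞) (p k) x) ∧
        ∀ μ : ℝ, 0 < μ → ∀ j : ℕ,
          (iteratedDeriv j (p k)) =O[atTop] fun x : ℝ => x ^ (-μ)) ∨
      ∃ i : ℤ, i ≤ (k : ℤ) ∧ MemAS (i : ℝ) (p k)) ∧
    ∃ i : ℤ, i ≤ (m : ℤ) ∧ MemAS (i : ℝ) (p m)

/-- The Bell polynomial `B_{n,k}(y_1, …, y_{n−k+1})`. -/
def bellPoly (n k : ℕ) (y : ℕ → ℝ) : ℝ :=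
  ∑ j ∈ Finset.univ.filter
      (fun j : Fin (n - k + 1) → Fin (n + 1) =>
        (∑ i, (j i : ℕ)) = k ∧ (∑ i, (i.1 + 1) * (j i : ℕ)) = n),
    ((n.factorial : ℝ) / ∏ i, ((j i : ℕ).factorial : ℝ)) *
      ∏ i, (y (i.1 + 1) / ((i.1 + 1).factorial : ℝ)) ^ (j i : ℕ)

/-- symbol class -/
def SymS (γ : ℝ) (f : ℝ → ℝ) : Prop :=
  (∀ᶠ x in atTop, ContDiffAt ℝ (⊤ : ℕ∞) f x) ∧
  ∀ j : ℕ, iteratedDeriv j f =O[atTop] fun x : ℝ => x ^ (γ - (j : ℝ))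

theorem cda_nat {f : ℝ → ℝ} {x : ℝ} (h : ContDiffAt ℝ (⊤ : ℕ∞) f x) (j : ℕ) :
    ContDiffAt ℝ j f x := h.of_le (by exact_mod_cast le_top)

theorem evEq_nhds {p : ℝ → Prop} (h : ∀ᶠ x in atTop, p x) :
    ∀ᶠ x in atTop, ∀ᶠ y in nhds x, p y := by
  obtain ⟨a, ha⟩ := eventually_atTop.1 h
  filter_upwards [eventually_gt_atTop a] with x hx
  filter_upwards [Ioi_mem_nhds hx] with y hy
  exact ha y (le_of_lt hy)

theorem SymS.congr {γ : ℝ} {f g : ℝ → ℝ} (hf : SymS γ f) (h : ∀ᶠ x in atTop, g x = f x) :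
    SymS γ g := by
  have h2 := evEq_nhds h
  refine ⟨?_, fun j => ?_⟩
  · filter_upwards [hf.1, h2] with x hx hx2
    exact hx.congr_of_eventuallyEq hx2
  · refine (hf.2 j).congr' ?_ EventuallyEq.rfl
    filter_upwards [h2] with x hx2
    exact (Filter.EventuallyEq.iteratedDeriv_eq j hx2).symm

theorem SymS.add {γ : ℝ} {f g : ℝ → ℝ} (hf : SymS γ f) (hg : SymS γ g) :
    SymS γ (fun x => f x + g x) := by
  refine ⟨?_, fun j => ?_⟩
  · filter_upwards [hf.1, hg.1] with x hx hx2
    exact hx.add hx2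
  · refine ((hf.2 j).add (hg.2 j)).congr' ?_ EventuallyEq.rfl
    filter_upwards [hf.1, hg.1] with x hx hx2
    exact (iteratedDeriv_add (cda_nat hx j) (cda_nat hx2 j)).symm

theorem SymS.const_mul {γ : ℝ} {f : ℝ → ℝ} (c : ℝ) (hf : SymS γ f) :
    SymS γ (fun x => c * f x) := by
  refine ⟨?_, fun j => ?_⟩
  · filter_upwards [hf.1] with x hx
    exact contDiffAt_const.mul hx
  · refine ((hf.2 j).const_mul_left c).congr' ?_ EventuallyEq.rfl
    filter_upwards [hf.1] with x hx
    exact (iteratedDeriv_const_mul c (cda_nat hx j)).symm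

theorem SymS.mono {γ δ : ℝ} {f : ℝ → ℝ} (h : γ ≤ δ) (hf : SymS γ f) : SymS δ f := by
  refine ⟨hf.1, fun j => (hf.2 j).trans ?_⟩
  refine Asymptotics.IsBigO.of_bound 1 ?_
  filter_upwards [eventually_ge_atTop (1:ℝ)] with x hx
  rw [one_mul, Real.norm_of_nonneg (by positivity), Real.norm_of_nonneg (by positivity)]
  exact Real.rpow_le_rpow_of_exponent_le hx (by linarith)

theorem SymS.mul {γ δ : ℝ} {f g : ℝ → ℝ} (hf : SymS γ f) (hg : SymS δ g) :
    SymS (γ + δ) (fun x => f x * g x) := by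
  refine ⟨?_, fun j => ?_⟩
  · filter_upwards [hf.1, hg.1] with x hx hx2
    exact hx.mul hx2
  · have key : (fun x => ∑ i ∈ Finset.range (j+1), (j.choose i : ℝ) *
        iteratedDeriv i f x * iteratedDeriv (j - i) g x) =O[atTop]
        fun x : ℝ => x ^ (γ + δ - (j : ℝ)) := by
      refine Asymptotics.IsBigO.fun_sum fun i hi => ?_
      have := ((hf.2 i).const_mul_left (j.choose i : ℝ)).mul (hg.2 (j - i))
      refine this.congr' EventuallyEq.rfl ?_
      filter_upwards [eventually_gt_atTop (0:ℝ)] with x hx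
      rw [← Real.rpow_add hx]
      have : i ≤ j := by simpa [Nat.lt_succ_iff] using hi
      rw [Nat.cast_sub this]; congr 1; ring
    refine key.congr' ?_ EventuallyEq.rfl
    filter_upwards [hf.1, hg.1] with x hx hx2
    exact (iteratedDeriv_mul (cda_nat hx j) (cda_nat hx2 j)).symm

theorem iterD_rpow (γ : ℝ) (j : ℕ) (x : ℝ) : iteratedDeriv j (fun x : ℝ => x ^ γ) x =
    (∏ l ∈ Finset.range j, (γ - (l : ℝ))) * x ^ (γ - (j : ℝ)) := by
  rw [iteratedDeriv_eq_iterate, Real.iter_deriv_rpow_const, descPochhammer_eval_eq_prod_range]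

theorem SymS.rpow (γ : ℝ) : SymS γ (fun x => x ^ γ) := by
  refine ⟨?_, fun j => ?_⟩
  · filter_upwards [eventually_gt_atTop (0:ℝ)] with x hx
    exact Real.contDiffAt_rpow_const_of_ne hx.ne'
  · have : iteratedDeriv j (fun x : ℝ => x ^ γ) = fun x => 
      (∏ l ∈ Finset.range j, (γ - (l : ℝ))) * x ^ (γ - (j : ℝ)) := by
      ext x; exact iterD_rpow γ j x
    rw [this]
    exact (Asymptotics.isBigO_refl _ _).const_mul_left _

theorem SymS.zero (γ : ℝ) : SymS γ (fun _ => 0) := by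
  have := (SymS.rpow γ).const_mul 0
  simpa using this

theorem SymS.sum {ι : Type*} {γ : ℝ} {f : ι → ℝ → ℝ} (s : Finset ι)
    (h : ∀ i ∈ s, SymS γ (f i)) : SymS γ (fun x => ∑ i ∈ s, f i x) := by
  classical
  induction s using Finset.induction_on with
  | empty => simpa using SymS.zero γ
  | insert a s ha ih =>
    simp only [Finset.sum_insert ha]
    exact (h a (by simp)).add (ih fun i hi => h i (by simp [hi]))

theorem SymS.poly (γ : ℝ) (P : Polynomial ℝ) : SymS γ (fun x => x ^ γ * P.eval x⁻¹) := by
  have : SymS γ (fun x => ∑ i ∈ Finset.range (P.natDegree + 1), P.coeff i * x ^ (γ - (i:ℝ))) :=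
    SymS.sum _ fun i _ => SymS.const_mul _ ((SymS.rpow _).mono (by simp))
  refine this.congr ?_
  filter_upwards [eventually_gt_atTop (0:ℝ)] with x hx
  rw [Polynomial.eval_eq_sum_range, Finset.mul_sum]
  refine Finset.sum_congr rfl fun i _ => ?_
  rw [Real.rpow_sub hx, Real.rpow_natCast, inv_pow]; ring

/-- expansions with power series coefficients -/
def HasE (γ : ℝ) (C : PowerSeries ℝ) (f : ℝ → ℝ) : Prop :=
  ∀ N : ℕ, SymS (γ - N) (fun x => f x - x ^ γ * (C.trunc N).eval x⁻¹)

theorem trunc_sum (γ : ℝ) (C : PowerSeries ℝ) (N : ℕ) {x : ℝ} (hx : 0 < x) :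
    x ^ γ * (C.trunc N).eval x⁻¹ =
      ∑ i ∈ Finset.range N, C.coeff i * x ^ (γ - (i:ℝ)) := by
  rw [show C.trunc N = ∑ i ∈ Finset.Ico 0 N, Polynomial.monomial i (C.coeff i) from rfl,
    Polynomial.eval_finsetSum, Finset.mul_sum, Nat.Ico_zero_eq_range]
  refine Finset.sum_congr rfl fun i _ => ?_
  rw [Polynomial.eval_monomial, Real.rpow_sub hx, Real.rpow_natCast, inv_pow]; ring

theorem iterD_sum (γ : ℝ) (C : ℕ → ℝ) (N j : ℕ) {x : ℝ} (hx : 0 < x) :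
    iteratedDeriv j (fun x => ∑ i ∈ Finset.range N, C i * x ^ (γ - (i:ℝ))) x =
     ∑ i ∈ Finset.range N,
          C i * (∏ l ∈ Finset.range j, (γ - (i : ℝ) - (l : ℝ))) * x ^ (γ - (i : ℝ) - (j : ℝ)) := by
  rw [iteratedDeriv_fun_sum]
  · refine Finset.sum_congr rfl fun i _ => ?_
    rw [iteratedDeriv_const_mul_field, iterD_rpow]; ring
  · intro i _
    exact contDiffAt_const.mul (Real.contDiffAt_rpow_const_of_ne hx.ne')

theorem ev_smooth_iff {f : ℝ → ℝ} : (∃ a : ℝ, 0 < a ∧ ∀ x ∈ Set.Ioi a, ContDiffAt ℝ (⊤ : ℕ∞) f x) ↔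
    ∀ᶠ x in atTop, ContDiffAt ℝ (⊤ : ℕ∞) f x := by
  constructor
  · rintro ⟨a, _, h⟩
    filter_upwards [eventually_gt_atTop a] with x hx using h x hx
  · intro h
    obtain ⟨a, ha⟩ := eventually_atTop.1 h
    exact ⟨max a 1, by positivity, fun x hx => ha x ((le_max_left _ _).trans (le_of_lt hx))⟩

theorem cd_sum (γ : ℝ) (C : ℕ → ℝ) (N : ℕ) {x : ℝ} (hx : 0 < x) :
    ContDiffAt ℝ (⊤ : ℕ∞) (fun x => ∑ i ∈ Finset.range N, C i * x ^ (γ - (i:ℝ))) x :=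
  ContDiffAt.sum fun i _ => contDiffAt_const.mul (Real.contDiffAt_rpow_const_of_ne hx.ne')

theorem hasE_iff {γ : ℝ} {C : PowerSeries ℝ} {f : ℝ → ℝ} :
    HasE γ C f ↔ HasExpA γ (fun i => C.coeff i) f := by
  have key : ∀ (N j : ℕ), (∀ᶠ x in atTop, ContDiffAt ℝ (⊤ : ℕ∞) f x) → 
     (iteratedDeriv j (fun x => f x - ∑ i ∈ Finset.range N, C.coeff i * x ^ (γ - (i:ℝ)))) =ᶠ[atTop]
      (fun x : ℝ => iteratedDeriv j f x -
        ∑ i ∈ Finset.range N,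
          C.coeff i * (∏ l ∈ Finset.range j, (γ - (i : ℝ) - (l : ℝ))) * x ^ (γ - (i : ℝ) - (j : ℝ))) := by
    intro N j h
    filter_upwards [h, eventually_gt_atTop (0:ℝ)] with x hx hx0
    rw [← iterD_sum γ (fun i => C.coeff i) N j hx0]
    exact iteratedDeriv_sub (cda_nat hx j) (cda_nat (cd_sum γ (fun i => C.coeff i) N hx0) j)
  constructor
  · intro h
    have h0 : ∀ᶠ x in atTop, ContDiffAt ℝ (⊤ : ℕ∞) f x := by
      have := (h 0).1
      simpa using this
    refine ⟨ev_smooth_iff.2 h0, fun j N => ?_⟩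
    have hN : SymS (γ - N) (fun x => f x - ∑ i ∈ Finset.range N, C.coeff i * x ^ (γ - (i:ℝ))) := by
      refine (h N).congr ?_
      filter_upwards [eventually_gt_atTop (0:ℝ)] with x hx
      rw [trunc_sum γ C N hx]
    exact (hN.2 j).congr' (key N j h0) EventuallyEq.rfl
  · rintro ⟨h0, h⟩ N
    rw [ev_smooth_iff] at h0
    have hN : SymS (γ - N) (fun x => f x - ∑ i ∈ Finset.range N, C.coeff i * x ^ (γ - (i:ℝ))) := by
      refine ⟨?_, fun j => (h j N).congr' (key N j h0).symm EventuallyEq.rfl⟩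
      filter_upwards [h0, eventually_gt_atTop (0:ℝ)] with x hx hx0
      exact hx.sub (cd_sum γ (fun i => C.coeff i) N hx0)
    refine hN.congr ?_
    filter_upwards [eventually_gt_atTop (0:ℝ)] with x hx
    rw [trunc_sum γ C N hx]

theorem HasE.symS {γ : ℝ} {C : PowerSeries ℝ} {f : ℝ → ℝ} (h : HasE γ C f) : SymS γ f := by
  have := h 0
  simpa using this

theorem HasE.add {γ : ℝ} {C D : PowerSeries ℝ} {f g : ℝ → ℝ} (hf : HasE γ C f) (hg : HasE γ D g) :
    HasE γ (C + D) (fun x => f x + g x) := fun N => by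
  refine ((hf N).add (hg N)).congr (Eventually.of_forall fun x => ?_)
  rw [map_add, Polynomial.eval_add]; ring

theorem HasE.const_mul {γ : ℝ} {C : PowerSeries ℝ} {f : ℝ → ℝ} (c : ℝ) (hf : HasE γ C f) :
    HasE γ (c • C) (fun x => c * f x) := fun N => by
  refine ((hf N).const_mul c).congr (Eventually.of_forall fun x => ?_)
  have : (c • C).trunc N = c • C.trunc N := by
    ext i; simp [PowerSeries.coeff_trunc]
  rw [this, Polynomial.eval_smul, smul_eq_mul]; ring

theorem HasE.zero (γ : ℝ) : HasE γ 0 (fun _ => 0) := fun N => by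
  simpa using SymS.zero _

theorem HasE.sum {ι : Type*} {γ : ℝ} {C : ι → PowerSeries ℝ} {f : ι → ℝ → ℝ} (s : Finset ι)
    (h : ∀ i ∈ s, HasE γ (C i) (f i)) : HasE γ (∑ i ∈ s, C i) (fun x => ∑ i ∈ s, f i x) := by
  classical
  induction s using Finset.induction_on with
  | empty => simpa using HasE.zero γ
  | insert a s ha ih =>
    simp only [Finset.sum_insert ha]
    exact (h a (by simp)).add (ih fun i hi => h i (by simp [hi]))

theorem HasE.mul {γ δ : ℝ} {C D : PowerSeries ℝ} {f g : ℝ → ℝ} (hf : HasE γ C f)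
    (hg : HasE δ D g) : HasE (γ + δ) (C * D) (fun x => f x * g x) := fun N => by
  have hdvd : Polynomial.X ^ N ∣ C.trunc N * D.trunc N - (C * D).trunc N := by
    rw [Polynomial.X_pow_dvd_iff]
    intro d hd
    rw [Polynomial.coeff_sub, PowerSeries.coeff_trunc, if_pos hd,
      PowerSeries.coeff_mul_eq_coeff_trunc_mul_trunc _ _ hd, ← Polynomial.coe_mul,
      Polynomial.coeff_coe, sub_self]
  obtain ⟨Q, hQ⟩ := hdvd
  have h1 := ((SymS.poly γ (C.trunc N)).mul (hg N))
  have h2 := ((hf N).mul hg.symS)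
  have h3 := SymS.poly (γ + δ - N) Q
  rw [show γ + (δ - N) = γ + δ - N by ring] at h1
  rw [show γ - N + δ = γ + δ - N by ring] at h2
  refine ((h1.add h2).add h3).congr ?_
  filter_upwards [eventually_gt_atTop (0:ℝ)] with x hx
  have e := congrArg (Polynomial.eval x⁻¹) hQ
  rw [Polynomial.eval_sub, Polynomial.eval_mul, Polynomial.eval_mul, Polynomial.eval_pow,
    Polynomial.eval_X] at e
  rw [Real.rpow_sub hx, Real.rpow_natCast, Real.rpow_add hx]
  have e2 : x ^ γ * x ^ δ / x ^ N * Polynomial.eval x⁻¹ Q = x ^ γ * x ^ δ *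
    (x⁻¹ ^ N * Polynomial.eval x⁻¹ Q) := by rw [inv_pow]; ring
  rw [e2, ← e]; ring

theorem HasE.one : HasE 0 1 (fun _ => 1) := fun N => by
  rcases N with _ | N
  · have := SymS.rpow 0
    simpa using this
  · rw [PowerSeries.trunc_one]
    simpa using SymS.zero _

theorem HasE.pow {γ : ℝ} {C : PowerSeries ℝ} {f : ℝ → ℝ} (hf : HasE γ C f) (k : ℕ) :
    HasE (γ * k) (C ^ k) (fun x => f x ^ k) := by
  induction k with
  | zero => simpa using HasE.one
  | succ k ih =>
    have := ih.mul hf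
    simp only [pow_succ]
    convert this using 1
    push_cast; ring

theorem HasE.prod {ι : Type*} {γ : ι → ℝ} {C : ι → PowerSeries ℝ} {f : ι → ℝ → ℝ} (s : Finset ι)
    (h : ∀ i ∈ s, HasE (γ i) (C i) (f i)) :
    HasE (∑ i ∈ s, γ i) (∏ i ∈ s, C i) (fun x => ∏ i ∈ s, f i x) := by
  classical
  induction s using Finset.induction_on with
  | empty => simpa using HasE.one
  | insert a s ha ih =>
    simp only [Finset.sum_insert ha, Finset.prod_insert ha]
    exact (h a (by simp)).mul (ih fun i hi => h i (by simp [hi]))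

theorem HasE.shift {γ : ℝ} {C : PowerSeries ℝ} {f : ℝ → ℝ} (hf : HasE γ C f) (ν : ℕ)
    (h : ∀ i < ν, C.coeff i = 0) :
    HasE (γ - ν) (PowerSeries.mk fun i => C.coeff (i + ν)) f := fun N => by
  have := hf (N + ν)
  rw [show γ - (N + ν : ℕ) = γ - ν - N by push_cast; ring] at this
  refine this.congr ?_
  filter_upwards [eventually_gt_atTop (0:ℝ)] with x hx
  rw [trunc_sum _ _ _ hx, trunc_sum _ _ _ hx, add_comm N ν, Finset.sum_range_add,
    Finset.sum_eq_zero (s := Finset.range ν), zero_add]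
  · congr 1
    refine Finset.sum_congr rfl fun i _ => ?_
    rw [PowerSeries.coeff_mk, add_comm ν i]; congr 2; push_cast; ring
  · intro i hi
    rw [h i (by simpa using hi), zero_mul]

theorem HasE.memAS {γ : ℝ} {C : PowerSeries ℝ} {f : ℝ → ℝ} (hf : HasE γ C f) (ν : ℕ)
    (h : ∀ i < ν, C.coeff i = 0) (h' : C.coeff ν ≠ 0) : MemAS (γ - ν) f :=
  ⟨_, by simpa using h', hasE_iff.1 (hf.shift ν h)⟩

theorem HasE.iterD {γ : ℝ} {C : PowerSeries ℝ} {f : ℝ → ℝ} (hf : HasE γ C f) (j : ℕ) :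
    HasE (γ - j) (PowerSeries.mk fun i => C.coeff i * ∏ l ∈ Finset.range j, (γ - (i : ℝ) - (l : ℝ)))
      (iteratedDeriv j f) := by
  rw [hasE_iff] at hf ⊢
  refine ⟨?_, fun j' N => ?_⟩
  · rw [ev_smooth_iff]
    have := evEq_nhds (ev_smooth_iff.1 hf.1)
    filter_upwards [this] with x hx
    have hx' := hx.self_of_nhds
    have : ∀ j : ℕ, ContDiffAt ℝ (⊤ : ℕ∞) (iteratedDeriv j f) x := by
      intro j
      induction j with
      | zero => simpa using hx'
      | succ j ih =>
        rw [iteratedDeriv_succ]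
        exact ih.derivWithin (m := (⊤ : ℕ∞)) (by exact_mod_cast le_rfl)
    exact this j
  · have := hf.2 (j + j') N
    rw [show γ - N - (j + j' : ℕ) = γ - j - N - j' by push_cast; ring] at this
    refine this.congr' (Eventually.of_forall fun x => ?_) EventuallyEq.rfl
    have e : iteratedDeriv j' (iteratedDeriv j f) = iteratedDeriv (j + j') f := by
      simp only [iteratedDeriv_eq_iterate]
      rw [add_comm, Function.iterate_add_apply]
    simp only [e]
    congr 1
    refine Finset.sum_congr rfl fun i _ => ?_
    rw [Finset.prod_range_add, PowerSeries.coeff_mk]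
    have e1 : γ - (i:ℝ) - (j + j' : ℕ) = γ - j - i - j' := by push_cast; ring
    rw [e1, mul_assoc (C.coeff i) _ (∏ l ∈ Finset.range j', _)]
    congr 3
    refine Finset.prod_congr rfl fun l _ => ?_
    push_cast; ring
open PowerSeries in
theorem choose_formula (r : ℝ) (N : ℕ) :
    Ring.choose r N = (∏ l ∈ Finset.range N, (r - (l:ℝ))) / (N.factorial : ℝ) := by
  rw [Ring.choose_eq_smul, ← descPochhammer_eval_eq_prod_range, smul_eq_mul,
    ← descPochhammer_map (Int.castRingHom ℝ), Polynomial.eval_map, ← Polynomial.eval₂_smulOneHom_eq_smeval,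
    div_eq_inv_mul]
  congr 2
  exact RingHom.ext_int _ _

open PowerSeries in
def bs (e : ℤ) : PowerSeries ℝ := binomialSeries ℝ (e : ℝ)

theorem bs_add (a b : ℤ) : bs (a + b) = bs a * bs b := by
  simp [bs]

theorem bs_nat (d : ℕ) : bs d = (1 + PowerSeries.X) ^ d := by
  simp [bs]

theorem bs_coeff (e : ℤ) (N : ℕ) : (bs e).coeff N =
    (∏ l ∈ Finset.range N, ((e:ℝ) - (l:ℝ))) / (N.factorial : ℝ) := by
  simp [bs, choose_formula]

theorem bs_coeff_zero (e : ℤ) (N : ℕ) (h : e < N) (h0 : 0 ≤ e) : (bs e).coeff N = 0 := by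
  rw [bs_coeff, Finset.prod_eq_zero (i := e.toNat), zero_div]
  · simp; omega
  · have : ((e.toNat : ℤ) : ℝ) = (e : ℝ) := by rw [Int.toNat_of_nonneg h0]
    rw [← this, Int.cast_natCast, sub_self]

theorem bs_coeff_neg (e : ℤ) (N : ℕ) (h0 : e < 0) : 0 < (-1) ^ N * (bs e).coeff N := by
  have hc : (-1 : ℝ) ^ N = ∏ _l ∈ Finset.range N, (-1 : ℝ) := by simp
  rw [bs_coeff, mul_div_assoc', hc, ← Finset.prod_mul_distrib]
  apply div_pos _ (by positivity)
  refine Finset.prod_pos fun l _ => ?_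
  have : (e:ℝ) < 0 := by exact_mod_cast h0
  have : (0:ℝ) ≤ l := by positivity
  linarith

def GG (s : ℕ) : PowerSeries ℝ := ∑ a ∈ Finset.range s, (1 + PowerSeries.X) ^ a

theorem GG_mul (s : ℕ) : (1 + PowerSeries.X) ^ s - 1 = PowerSeries.X * GG s := by
  have := geom_sum_mul (1 + PowerSeries.X : PowerSeries ℝ) s
  rw [← this, GG]; ring

theorem GG_sgn (s : ℕ) (hs : 0 < s) (K : ℕ) : ∀ (e : ℤ) (N : ℕ), e + (s - 1) * K < N →
    0 ≤ (-1) ^ N * (GG s ^ K * bs e).coeff N ∧ (e < 0 → 0 < (-1) ^ N * (GG s ^ K * bs e).coeff N) := by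
  induction K with
  | zero =>
    intro e N h
    simp only [pow_zero, one_mul]
    refine ⟨?_, bs_coeff_neg e N⟩
    rcases lt_or_ge e 0 with h0 | h0
    · exact (bs_coeff_neg e N h0).le
    · rw [bs_coeff_zero e N (by simpa using h) h0, mul_zero]
  | succ K ih =>
    intro e N h
    have e1 : GG s ^ (K+1) * bs e = ∑ a ∈ Finset.range s, GG s ^ K * bs (e + a) := by
      rw [pow_succ, mul_assoc, ← Finset.mul_sum]
      congr 1
      rw [GG, Finset.sum_mul]
      refine Finset.sum_congr rfl fun a _ => ?_
      rw [bs_add, bs_nat, mul_comm]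
    rw [e1, map_sum, Finset.mul_sum]
    have hN : ∀ a ∈ Finset.range s, (e + a) + ((s:ℤ) - 1) * K < N := by
      intro a ha
      have : a < s := by simpa using ha
      push_cast at h
      have : (a:ℤ) ≤ s - 1 := by omega
      linarith
    refine ⟨Finset.sum_nonneg fun a ha => (ih _ N (hN a ha)).1, fun he => ?_⟩
    refine Finset.sum_pos' (fun a ha => (ih _ N (hN a ha)).1) ⟨0, by simpa using hs, ?_⟩
    exact (ih _ N (hN 0 (by simpa using hs))).2 (by simpa using he)

theorem GG_coeff (s i : ℕ) : 0 ≤ (GG s).coeff i ∧ (i < s → 0 < (GG s).coeff i) := by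
  have hc : ∀ a : ℕ, ((1 + PowerSeries.X : PowerSeries ℝ) ^ a).coeff i = (a.choose i : ℝ) := by
    intro a
    have := Polynomial.coeff_one_add_X_pow ℝ a i
    rw [← this, ← Polynomial.coeff_coe]; simp
  simp only [GG, map_sum, hc]
  refine ⟨by positivity, fun h => ?_⟩
  exact Finset.sum_pos' (fun _ _ => by positivity) ⟨i, by simpa using h, by simp⟩

theorem GG_pos (s : ℕ) (hs : 0 < s) (K : ℕ) : ∀ i : ℕ, 0 ≤ (GG s ^ K).coeff i ∧
    (i ≤ (s - 1) * K → 0 < (GG s ^ K).coeff i) := by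
  induction K with
  | zero =>
    intro i
    rw [pow_zero, PowerSeries.coeff_one]
    refine ⟨by split_ifs <;> norm_num, fun h => ?_⟩
    simp at h
    simp [h]
  | succ K ih =>
    intro i
    rw [pow_succ, PowerSeries.coeff_mul]
    have hn : ∀ p ∈ Finset.HasAntidiagonal.antidiagonal i, 0 ≤ (GG s ^ K).coeff p.1 * (GG s).coeff p.2 :=
      fun p _ => mul_nonneg (ih _).1 (GG_coeff s _).1
    refine ⟨Finset.sum_nonneg hn, fun h => ?_⟩
    refine Finset.sum_pos' hn ⟨(i - min i (s-1), min i (s-1)), by simp, ?_⟩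
    refine mul_pos ((ih _).2 ?_) ((GG_coeff s _).2 (by simp; omega))
    rw [Nat.mul_succ] at h
    simp only
    omega

theorem deg_pow {R : Type*} [CommRing R] (d : ℕ) (f : PowerSeries R)
    (h : ∀ i, d < i → f.coeff i = 0) (k : ℕ) : ∀ i, d * k < i → (f ^ k).coeff i = 0 := by
  induction k with
  | zero =>
    intro i hi
    rw [pow_zero, PowerSeries.coeff_one, if_neg (by omega)]
  | succ k ih =>
    intro i hi
    rw [pow_succ, PowerSeries.coeff_mul]
    refine Finset.sum_eq_zero fun p hp => ?_
    rw [Finset.HasAntidiagonal.mem_antidiagonal] at hp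
    rw [Nat.mul_succ] at hi
    rcases lt_or_ge (d * k) p.1 with h1 | h1
    · rw [ih _ h1, zero_mul]
    · rw [h p.2 (by omega), mul_zero]

theorem key1 (s n k : ℕ) (hs : 0 < s) (hkn : k ≤ n) (hn : n ≤ s * k) :
    (((bs s - 1) ^ k).coeff n) ≠ 0 := by
  rw [bs_nat, GG_mul, mul_pow, PowerSeries.coeff_X_pow_mul', if_pos hkn]
  refine ((GG_pos s hs k _).2 ?_).ne'
  rw [Nat.sub_mul, one_mul]; omega

theorem key3 (s n K : ℕ) (hs : 0 < s) (e : ℤ) (he : e < 0) (hn : s * K < n) :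
    (((bs s - 1) ^ K * (bs e - 1)).coeff n) ≠ 0 := by
  have h0 : ((bs s - 1) ^ K).coeff n = 0 := by
    refine deg_pow s _ (fun i hi => ?_) K n hn
    rw [map_sub, bs_coeff_zero _ _ (by exact_mod_cast hi) (by positivity), PowerSeries.coeff_one,
      if_neg (by omega), sub_zero]
  rw [mul_sub, mul_one, map_sub, h0, sub_zero, bs_nat, GG_mul, mul_pow, mul_assoc,
    PowerSeries.coeff_X_pow_mul', if_pos (by nlinarith)]
  have hK : K ≤ n := by nlinarith
  have := (GG_sgn s hs K e (n - K) ?_).2 he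
  · intro h
    rw [h] at this; simp at this
  · push_cast [hK]
    have : (s * K : ℤ) < n := by exact_mod_cast hn
    linarith

theorem pow_coeff {M n s k : ℕ} (hM : 0 < M) (A B : PowerSeries (PowerSeries ℝ))
    (hA : ∀ i, s < i → A.coeff i = 0) (hn : s * k < n) :
    (∀ i < M, (((A + PowerSeries.C (PowerSeries.X ^ M) * B) ^ k).coeff n).coeff i = 0) ∧
    (((A + PowerSeries.C (PowerSeries.X ^ M) * B) ^ k).coeff n).coeff M =
      k * ((A.map PowerSeries.constantCoeff) ^ (k - 1) * B.map PowerSeries.constantCoeff).coeff n := by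
  obtain ⟨w, hw⟩ := Polynomial.powAddExpansion A (PowerSeries.C (PowerSeries.X ^ M) * B) k
  have e : (A + PowerSeries.C (PowerSeries.X ^ M) * B) ^ k = A ^ k + PowerSeries.C (PowerSeries.X ^ M) *
      (PowerSeries.C (k : PowerSeries ℝ) * (A ^ (k - 1) * B) + PowerSeries.C (PowerSeries.X ^ M) * (w * B ^ 2)) := by
    rw [hw, map_natCast]; ring
  rw [e, map_add, deg_pow s A hA k n hn, zero_add, PowerSeries.coeff_C_mul, map_add,
    PowerSeries.coeff_C_mul, PowerSeries.coeff_C_mul]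
  constructor
  · intro i hi
    rw [PowerSeries.coeff_X_pow_mul', if_neg (by omega)]
  · rw [PowerSeries.coeff_X_pow_mul', if_pos le_rfl, Nat.sub_self,
      PowerSeries.coeff_zero_eq_constantCoeff_apply, map_add,
      map_mul PowerSeries.constantCoeff, map_mul PowerSeries.constantCoeff,
      map_pow PowerSeries.constantCoeff,
      PowerSeries.constantCoeff_X, zero_pow hM.ne', zero_mul, add_zero, map_natCast,
      ← map_pow (PowerSeries.map _), ← map_mul (PowerSeries.map _), PowerSeries.coeff_map]

theorem bell_ring {R : Type*} [CommRing R] [Algebra ℝ R] (n k : ℕ) (Y : ℕ → R) :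
    ∑ j ∈ Finset.univ.filter
      (fun j : Fin (n - k + 1) → Fin (n + 1) =>
        (∑ i, (j i : ℕ)) = k ∧ (∑ i, (i.1 + 1) * (j i : ℕ)) = n),
    ((n.factorial : ℝ) / ∏ i, ((j i : ℕ).factorial : ℝ)) • ∏ i, (Y (i.1 + 1)) ^ (j i : ℕ) =
    ((n.factorial : ℝ) / (k.factorial : ℝ)) •
      ((∑ i : Fin (n - k + 1), PowerSeries.C (Y (i.1 + 1)) * PowerSeries.X ^ (i.1 + 1)) ^ k).coeff n := by
  classical
  rw [Finset.sum_pow_eq_sum_piAntidiag, map_sum, Finset.smul_sum]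
  have hterm : ∀ j : Fin (n - k + 1) → ℕ,
      ((Nat.multinomial Finset.univ j : PowerSeries R) *
        ∏ i : Fin (n - k + 1), (PowerSeries.C (Y (i.1 + 1)) * PowerSeries.X ^ (i.1 + 1)) ^ j i).coeff n =
      if (∑ i, (i.1 + 1) * j i) = n then (Nat.multinomial Finset.univ j : R) * ∏ i, (Y (i.1+1)) ^ j i else 0 := by
    intro j
    have : ((Nat.multinomial Finset.univ j : PowerSeries R) *
        ∏ i : Fin (n - k + 1), (PowerSeries.C (Y (i.1 + 1)) * PowerSeries.X ^ (i.1 + 1)) ^ j i) =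
        PowerSeries.C ((Nat.multinomial Finset.univ j : R) * ∏ i, (Y (i.1+1)) ^ j i) *
          PowerSeries.X ^ (∑ i : Fin (n - k + 1), (i.1 + 1) * j i) := by
      simp only [mul_pow, Finset.prod_mul_distrib, map_mul, map_natCast, map_prod, map_pow, ← pow_mul,
        Finset.prod_pow_eq_pow_sum, mul_assoc]
    rw [this, PowerSeries.coeff_C_mul, PowerSeries.coeff_X_pow]
    simp [eq_comm]
  simp only [hterm, smul_ite, smul_zero]
  rw [← Finset.sum_filter]
  refine Finset.sum_bij (fun j _ i => (j i : ℕ)) ?_ ?_ ?_ ?_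
  · intro j hj
    simp only [Finset.mem_filter, Finset.mem_univ, true_and] at hj
    simp [hj.1, hj.2]
  · intro a _ b _ h
    ext i
    exact congrFun h i
  · intro j hj
    simp only [Finset.mem_filter, Finset.mem_piAntidiag] at hj
    have hle : ∀ i, j i < n + 1 := by
      intro i
      have h1 := Finset.single_le_sum (f := fun i : Fin (n - k + 1) => (i.1 + 1) * j i)
        (fun _ _ => Nat.zero_le _) (Finset.mem_univ i)
      rw [hj.2] at h1
      have : j i ≤ (i.1 + 1) * j i := Nat.le_mul_of_pos_left _ (by omega)
      have h1' : (i.1 + 1) * j i ≤ n := h1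
      omega
    refine ⟨fun i => ⟨j i, hle i⟩, ?_, rfl⟩
    simp [hj.1.1, hj.2]
  · intro j hj
    simp only [Finset.mem_filter, Finset.mem_univ, true_and] at hj
    have hm := Nat.multinomial_spec Finset.univ (fun i => (j i : ℕ))
    rw [hj.1] at hm
    have hm' : (∏ i, ((j i : ℕ).factorial : ℝ)) * (Nat.multinomial Finset.univ (fun i => (j i : ℕ)) : ℝ)
       = (k.factorial : ℝ) := by exact_mod_cast hm
    rw [← nsmul_eq_mul, ← Nat.cast_smul_eq_nsmul ℝ, smul_smul]
    congr 1
    have h1 : (∏ i, ((j i : ℕ).factorial : ℝ)) ≠ 0 := Finset.prod_ne_zero_iff.2 fun i _ => by positivity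
    have h2 : (k.factorial : ℝ) ≠ 0 := by positivity
    rw [div_mul_eq_mul_div, div_eq_div_iff h1 h2, ← hm']; ring

theorem bell_trunc {R : Type*} [CommRing R] (n k : ℕ) (hkn : k ≤ n) (Φ : PowerSeries R)
    (h0 : Φ.coeff 0 = 0) :
    ((∑ i : Fin (n - k + 1), PowerSeries.C (Φ.coeff (i.1 + 1)) * PowerSeries.X ^ (i.1 + 1)) ^ k).coeff n
     = (Φ ^ k).coeff n := by
  set Ψ : PowerSeries R := PowerSeries.mk fun i => Φ.coeff (i + 1) with hΨ
  have e1 : Φ = PowerSeries.X * Ψ := by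
    ext i
    rcases i with _ | i
    · simpa using h0
    · rw [PowerSeries.coeff_succ_X_mul, hΨ, PowerSeries.coeff_mk]
  have e2 : (∑ i : Fin (n - k + 1), PowerSeries.C (Φ.coeff (i.1 + 1)) * PowerSeries.X ^ (i.1 + 1)) =
      PowerSeries.X * (Ψ.trunc (n - k + 1) : PowerSeries R) := by
    rw [Fin.sum_univ_eq_sum_range (fun i => PowerSeries.C (Φ.coeff (i + 1)) * PowerSeries.X ^ (i + 1))]
    ext i
    rcases i with _ | i
    · simp
    · simp [PowerSeries.coeff_succ_X_mul, PowerSeries.coeff_X_pow, PowerSeries.coeff_trunc, hΨ]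
  rw [e2, e1, mul_pow, mul_pow, PowerSeries.coeff_X_pow_mul', PowerSeries.coeff_X_pow_mul', if_pos hkn,
    if_pos hkn]
  have := PowerSeries.trunc_trunc_pow Ψ (n - k + 1) k
  have := congrArg (fun P => Polynomial.coeff P (n - k)) this
  simp only [PowerSeries.coeff_trunc] at this
  rwa [if_pos (by omega), if_pos (by omega)] at this
/-- coefficient series of the scaled derivatives -/
def YY (s : ℕ) (c : PowerSeries ℝ) (i : ℕ) : PowerSeries ℝ :=
  PowerSeries.mk fun l => c.coeff l * (bs ((s : ℤ) - l)).coeff i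

def PhiS (s : ℕ) (c : PowerSeries ℝ) : PowerSeries (PowerSeries ℝ) :=
  PowerSeries.mk fun i => if i = 0 then 0 else YY s c i

theorem bell_hasE (s : ℕ) (g : ℝ → ℝ) (c : PowerSeries ℝ) (hg : HasE (s : ℝ) c g)
    (n k : ℕ) (hkn : k ≤ n) :
    HasE ((s : ℝ) * (k : ℝ) - (n : ℝ))
      (((n.factorial : ℝ) / (k.factorial : ℝ)) • (PhiS s c ^ k).coeff n)
      (fun x => bellPoly n k (fun i => iteratedDeriv i g x)) := by
  have hY : ∀ i : ℕ, (PhiS s c).coeff (i + 1) = YY s c (i + 1) := by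
    intro i; simp [PhiS]
  have h0 : (PhiS s c).coeff 0 = 0 := by
    rw [PhiS, PowerSeries.coeff_mk, if_pos rfl]
  rw [← bell_trunc n k hkn (PhiS s c) h0]
  simp only [hY]
  rw [← bell_ring n k (YY s c)]
  unfold bellPoly
  refine HasE.sum _ fun j hj => HasE.const_mul _ ?_
  simp only [Finset.mem_filter, Finset.mem_univ, true_and] at hj
  have hd : ∀ i : ℕ, HasE ((s:ℝ) - i) (YY s c i)
      (fun x => iteratedDeriv i g x / (i.factorial : ℝ)) := by
    intro i
    have h1 := (hg.iterD i).const_mul ((i.factorial : ℝ)⁻¹)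
    have e : (fun x => iteratedDeriv i g x / (i.factorial : ℝ)) =
      fun x => (i.factorial : ℝ)⁻¹ * iteratedDeriv i g x := by
      ext x; rw [div_eq_inv_mul]
    rw [e]
    convert h1 using 1
    ext l
    simp only [YY, PowerSeries.coeff_mk, PowerSeries.coeff_smul, bs_coeff, smul_eq_mul]
    push_cast
    ring
  have := HasE.prod (Finset.univ : Finset (Fin (n - k + 1)))
    (fun i _ => (hd (i.1 + 1)).pow (j i : ℕ))
  convert this using 1
  have e1 : ((∑ i, (j i : ℕ) : ℕ) : ℝ) = k := by rw [hj.1]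
  have e2 : ((∑ i : Fin (n - k + 1), (i.1 + 1) * (j i : ℕ) : ℕ) : ℝ) = n := by rw [hj.2]
  rw [← e1, ← e2]
  push_cast
  rw [Finset.mul_sum, ← Finset.sum_sub_distrib]
  refine Finset.sum_congr rfl fun i _ => ?_
  ring

theorem YY_coeff_zero (s : ℕ) (c : PowerSeries ℝ) (i l : ℕ) (hi : s < i)
    (h : s < l → c.coeff l = 0) : (YY s c i).coeff l = 0 := by
  rw [YY, PowerSeries.coeff_mk]
  rcases lt_or_ge s l with h1 | h1
  · rw [h h1, zero_mul]
  · rw [bs_coeff_zero _ _ (by omega) (by omega), mul_zero]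

theorem phi_sub (s : ℕ) (a : ℝ) (e : ℤ) (i : ℕ) :
    (a • (bs e - 1)).coeff i = if i = 0 then 0 else a * (bs e).coeff i := by
  rw [PowerSeries.coeff_smul, map_sub, PowerSeries.coeff_one]
  split_ifs with h
  · subst h; simp [bs_coeff]
  · simp

theorem case1 (s : ℕ) (hs : 0 < s) (c : PowerSeries ℝ) (h0 : c.coeff 0 ≠ 0)
    (n k : ℕ) (hkn : k ≤ n) (hn : n ≤ s * k) : ((PhiS s c ^ k).coeff n).coeff 0 ≠ 0 := by
  have e : (PhiS s c).map PowerSeries.constantCoeff = c.coeff 0 • (bs s - 1) := by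
    ext i
    rw [phi_sub s, PowerSeries.coeff_map, PhiS, PowerSeries.coeff_mk]
    split_ifs
    · simp
    · rw [← PowerSeries.coeff_zero_eq_constantCoeff_apply, YY, PowerSeries.coeff_mk]; simp
  rw [PowerSeries.coeff_zero_eq_constantCoeff_apply, ← PowerSeries.coeff_map, map_pow, e, smul_pow,
    PowerSeries.coeff_smul]
  exact mul_ne_zero (pow_ne_zero _ h0) (key1 s n k hs hkn hn)

theorem case3 (s : ℕ) (hs : 0 < s) (c : PowerSeries ℝ) (h0 : c.coeff 0 ≠ 0) (M : ℕ) (hM : s < M)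
    (hc : ∀ l, s < l → l < M → c.coeff l = 0) (hcM : c.coeff M ≠ 0)
    (n k : ℕ) (hk : 1 ≤ k) (hn : s * k < n) :
    (∀ i < M, ((PhiS s c ^ k).coeff n).coeff i = 0) ∧ ((PhiS s c ^ k).coeff n).coeff M ≠ 0 := by
  set A : PowerSeries (PowerSeries ℝ) := PowerSeries.mk fun i => PowerSeries.mk fun l =>
    if l < M then ((PhiS s c).coeff i).coeff l else 0 with hA
  set B : PowerSeries (PowerSeries ℝ) := PowerSeries.mk fun i => PowerSeries.mk fun l =>
    ((PhiS s c).coeff i).coeff (l + M) with hB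
  have e : PhiS s c = A + PowerSeries.C (PowerSeries.X ^ M) * B := by
    ext i l
    rw [map_add, map_add, PowerSeries.coeff_C_mul, PowerSeries.coeff_X_pow_mul', hA, hB]
    simp only [PowerSeries.coeff_mk]
    by_cases h : l < M
    · rw [if_pos h, if_neg (by omega), add_zero]
    · rw [if_neg h, if_pos (by omega), zero_add, Nat.sub_add_cancel (by omega)]
  have hA0 : ∀ i, s < i → A.coeff i = 0 := by
    intro i hi
    ext l
    rw [hA, PowerSeries.coeff_mk, PowerSeries.coeff_mk, map_zero]
    split_ifs with h
    · rw [PhiS, PowerSeries.coeff_mk, if_neg (by omega)]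
      exact YY_coeff_zero s c i l hi fun h' => hc l h' h
    · rfl
  obtain ⟨p1, p2⟩ := pow_coeff (M := M) (n := n) (s := s) (k := k) (by omega) A B hA0 hn
  rw [← e] at p1 p2
  refine ⟨p1, ?_⟩
  rw [p2]
  have eA : A.map PowerSeries.constantCoeff = c.coeff 0 • (bs s - 1) := by
    ext i
    rw [phi_sub s, PowerSeries.coeff_map, hA, PowerSeries.coeff_mk,
      ← PowerSeries.coeff_zero_eq_constantCoeff_apply, PowerSeries.coeff_mk, if_pos (by omega), PhiS,
      PowerSeries.coeff_mk]
    split_ifs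
    · simp
    · rw [YY, PowerSeries.coeff_mk]; simp
  have eB : B.map PowerSeries.constantCoeff = c.coeff M • (bs ((s:ℤ) - M) - 1) := by
    ext i
    rw [phi_sub s, PowerSeries.coeff_map, hB, PowerSeries.coeff_mk,
      ← PowerSeries.coeff_zero_eq_constantCoeff_apply, PowerSeries.coeff_mk, PhiS,
      PowerSeries.coeff_mk, zero_add]
    split_ifs
    · simp
    · rw [YY, PowerSeries.coeff_mk]
  rw [eA, eB, smul_pow, smul_mul_smul_comm, PowerSeries.coeff_smul]
  refine mul_ne_zero (by positivity) (mul_ne_zero (mul_ne_zero (pow_ne_zero _ h0) hcM) ?_)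
  refine key3 s n (k - 1) hs _ (by omega) ?_
  refine lt_of_le_of_lt (Nat.mul_le_mul_left _ (Nat.sub_le _ _)) hn

theorem HasE.lim {γ : ℝ} {C : PowerSeries ℝ} {f : ℝ → ℝ} (h : HasE γ C f) :
    Tendsto (fun x => x ^ (-γ) * f x) atTop (nhds (C.coeff 0)) := by
  have h1 := (h 1).2 0
  have h2 : (fun x : ℝ => x ^ (-γ) * (f x - x ^ γ * (C.trunc 1).eval x⁻¹)) =O[atTop]
      fun x : ℝ => x ^ (-1 : ℝ) := by
    rw [iteratedDeriv_zero] at h1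
    refine ((Asymptotics.isBigO_refl (fun x : ℝ => x ^ (-γ)) atTop).mul h1).congr'
      EventuallyEq.rfl ?_
    filter_upwards [eventually_gt_atTop (0:ℝ)] with x hx
    rw [← Real.rpow_add hx]; congr 1; push_cast; ring
  have h3 := h2.trans_tendsto (tendsto_rpow_neg_atTop one_pos)
  have h4 := h3.add_const (C.coeff 0)
  rw [zero_add] at h4
  refine h4.congr' ?_
  filter_upwards [eventually_gt_atTop (0:ℝ)] with x hx
  rw [trunc_sum _ _ _ hx]
  simp only [Finset.range_one, Finset.sum_singleton, Nat.cast_zero, sub_zero]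
  have : x ^ (-γ) * x ^ γ = 1 := by rw [← Real.rpow_add hx]; simp
  linear_combination (-(C.coeff 0)) * this

theorem lim_unique_zero {γ : ℝ} {C D : PowerSeries ℝ} {f : ℝ → ℝ} (h : HasE γ C f)
    (hC : C = 0) {δ : ℝ} (h' : HasE δ D f) : D.coeff 0 = 0 := by
  subst hC
  obtain ⟨N, hN⟩ := exists_nat_gt (γ - δ)
  have h1 := h.shift N (by simp)
  have h2 : SymS δ f := by
    exact h1.symS.mono (by linarith)
  have h3 := h1.lim
  simp only [map_zero, PowerSeries.coeff_mk] at h3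
  have h4 : Tendsto (fun x : ℝ => x ^ (-(δ - (γ - N)))) atTop (nhds 0) :=
    tendsto_rpow_neg_atTop (by linarith)
  have h5 := h4.mul h3
  rw [mul_zero] at h5
  refine tendsto_nhds_unique h'.lim (h5.congr' ?_)
  filter_upwards [eventually_gt_atTop (0:ℝ)] with x hx
  rw [← mul_assoc, ← Real.rpow_add hx]; congr 2; ring

theorem bell_zero (s n k : ℕ) (hn : s * k < n) (y : ℕ → ℝ)
    (hy : ∀ i, s < i → i ≤ n + 1 → y i = 0) : bellPoly n k y = 0 := by
  unfold bellPoly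
  refine Finset.sum_eq_zero fun j hj => ?_
  simp only [Finset.mem_filter, Finset.mem_univ, true_and] at hj
  have : ∃ i : Fin (n - k + 1), s < i.1 + 1 ∧ (j i : ℕ) ≠ 0 := by
    by_contra hcon
    push Not at hcon
    have : (∑ i : Fin (n - k + 1), (i.1 + 1) * (j i : ℕ)) ≤ ∑ i, s * (j i : ℕ) := by
      refine Finset.sum_le_sum fun i _ => ?_
      rcases lt_or_ge s (i.1 + 1) with h | h
      · simp [hcon i h]
      · exact Nat.mul_le_mul_right _ h
    rw [← Finset.mul_sum, hj.1, hj.2] at this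
    omega
  obtain ⟨i, hi, hji⟩ := this
  refine mul_eq_zero_of_right _ (Finset.prod_eq_zero (Finset.mem_univ i) ?_)
  rw [hy _ hi (by omega), zero_div, zero_pow hji]

theorem bell_kk (k : ℕ) (y : ℕ → ℝ) : bellPoly k k y = y 1 ^ k := by
  have := bell_ring (R := ℝ) k k (fun i => y i / (i.factorial : ℝ))
  have e : bellPoly k k y = _ := this
  rw [e, Fin.sum_univ_eq_sum_range (fun i => PowerSeries.C (y (i + 1) / ((i+1).factorial : ℝ)) *
    PowerSeries.X ^ (i + 1))]
  have hf : (k.factorial : ℝ) ≠ 0 := by positivity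
  rw [Nat.sub_self, zero_add, Finset.sum_range_one, zero_add, pow_one, mul_pow, ← map_pow,
    PowerSeries.coeff_C_mul, PowerSeries.coeff_X_pow, if_pos rfl, div_self hf]
  simp

/-- for `g ∈ X^(s)` strictly (`s` a positive integer, `g(x) → +∞`) and
`1 ≤ k ≤ n`, the function `L_{n,k}(x) = B_{n,k}(g'(x), …, g^{(n−k+1)}(x))` either vanishes
identically for all large `x` or belongs to `A^(sk−n−ν)` strictly for some nonnegative
integer `ν`; moreover `L_{k,k}(x) = (g'(x))^k`, which is positive for all large `x` and
belongs to `A^(sk−k)` strictly. -/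
theorem bell_of_g (s : ℕ) (hs : 0 < s) (g : ℝ → ℝ)
    (hg : MemXS (s : ℝ) g) (hgtop : Tendsto g atTop atTop)
    (n k : ℕ) (hk : 1 ≤ k) (hkn : k ≤ n) :
    ((∀ᶠ x in atTop, bellPoly n k (fun i => iteratedDeriv i g x) = 0) ∨
      ∃ ν : ℕ, MemAS ((s : ℝ) * (k : ℝ) - (n : ℝ) - (ν : ℝ))
        (fun x => bellPoly n k (fun i => iteratedDeriv i g x))) ∧
    (∀ x : ℝ, bellPoly k k (fun i => iteratedDeriv i g x) = (deriv g x) ^ k) ∧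
    (∀ᶠ x in atTop, 0 < (deriv g x) ^ k) ∧
    MemAS ((s : ℝ) * (k : ℝ) - (k : ℝ)) (fun x => (deriv g x) ^ k) := by
  obtain ⟨⟨c', hc0, hc⟩, hder⟩ := hg
  have hE : HasE (s : ℝ) (PowerSeries.mk c') g := by
    rw [hasE_iff]; simpa using hc
  set c : PowerSeries ℝ := PowerSeries.mk c' with hcdef
  have h0 : c.coeff 0 ≠ 0 := by simpa [hcdef] using hc0
  have hcpos : 0 < c.coeff 0 := by
    refine lt_of_le_of_ne (ge_of_tendsto hE.lim ?_) h0.symm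
    filter_upwards [hgtop.eventually_gt_atTop 0, eventually_gt_atTop (0:ℝ)] with x hx hx0
    positivity
  have hd := hE.iterD 1
  rw [iteratedDeriv_one] at hd
  have hd0 : 0 < (PowerSeries.mk fun i => c.coeff i *
      ∏ l ∈ Finset.range 1, ((s:ℝ) - (i : ℝ) - (l : ℝ))).coeff 0 := by
    have : (0:ℝ) < s := by exact_mod_cast hs
    rw [PowerSeries.coeff_mk, Finset.prod_range_one]
    simp only [Nat.cast_zero, sub_zero]
    positivity
  refine ⟨?_, ?_, ?_, ?_⟩
  · have hL := bell_hasE s g c hE n k hkn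
    have hf : ((n.factorial : ℝ) / (k.factorial : ℝ)) ≠ 0 := by positivity
    rcases le_or_gt n (s * k) with hn | hn
    · right
      refine ⟨0, hL.memAS 0 (by simp) ?_⟩
      rw [PowerSeries.coeff_smul]
      exact mul_ne_zero hf (case1 s hs c h0 n k hkn hn)
    · by_cases hz : ∀ l, s < l → c.coeff l = 0
      · left
        have hall : ∀ i, s < i → ∀ᶠ x in atTop, iteratedDeriv i g x = 0 := by
          intro i hi
          rcases hder i (by omega) with h | ⟨q, d, hd0, hd⟩
          · exact h
          · exfalso
            have hi1 := hE.iterD i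
            have hd' : HasE ((s:ℝ) - i - q) (PowerSeries.mk d) (iteratedDeriv i g) := by
              rw [hasE_iff]; simpa using hd
            refine hd0 ?_
            have := lim_unique_zero hi1 ?_ hd'
            · simpa using this
            · ext l
              rw [PowerSeries.coeff_mk, map_zero]
              rcases lt_or_ge s l with h1 | h1
              · rw [hz l h1, zero_mul]
              · rw [Finset.prod_eq_zero (i := s - l), mul_zero]
                · simp; omega
                · rw [Nat.cast_sub h1]; ring
        have hfin : ∀ᶠ x in atTop, ∀ i ∈ Finset.Icc (s+1) (n+1), iteratedDeriv i g x = 0 := by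
          rw [Filter.eventually_all_finset]
          intro i hi
          exact hall i (by simp at hi; omega)
        filter_upwards [hfin] with x hx
        exact bell_zero s n k hn _ fun i h1 h2 => hx i (by simp; omega)
      · right
        push Not at hz
        classical
        have hM := Nat.find_spec hz
        have hmin : ∀ l, s < l → l < Nat.find hz → c.coeff l = 0 := by
          intro l h1 h2
          by_contra h3
          exact Nat.find_min hz h2 ⟨h1, h3⟩
        obtain ⟨p1, p2⟩ := case3 s hs c h0 _ hM.1 hmin hM.2 n k hk hn
        refine ⟨Nat.find hz, hL.memAS _ (fun i hi => ?_) ?_⟩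
        · rw [PowerSeries.coeff_smul, p1 i hi, smul_zero]
        · rw [PowerSeries.coeff_smul]
          exact mul_ne_zero hf p2
  · intro x
    rw [bell_kk, iteratedDeriv_one]
  · filter_upwards [hd.lim.eventually_const_lt hd0, eventually_gt_atTop (0:ℝ)] with x hx hx0
    have : 0 < deriv g x := by
      by_contra hcon
      push Not at hcon
      have h2 : 0 < x ^ (-((s:ℝ) - (1:ℕ))) := by positivity
      nlinarith
    positivity
  · have hp := hd.pow k
    have := hp.memAS 0 (by simp) ?_
    · convert this using 1
      push_cast; ring
    · rw [PowerSeries.coeff_zero_eq_constantCoeff_apply, map_pow,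
        ← PowerSeries.coeff_zero_eq_constantCoeff_apply]
      exact pow_ne_zero _ hd0.ne'
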